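/- arXiv:2501.02657 — 3 statements merged into one kernel-verified Lean document; each statement's English description precedes it below -/
import Mathlib

section
/- Let $F : \mathbb{R}^n \to \mathbb{R}^n$, let $\mathcal{J}(x)$ be an $n \times n$ matrix with $\|\mathcal{J}(x)^{\mathsf{T}} v\| \leq c_2 \|v\|$ for all $v$ (some $c_2 > 0$), and suppose the safeguard $\langle F(x), \mathcal{J}(x) F(x) \rangle \geq \varepsilon \|F(x)\|^2$ holds for some $\varepsilon > 0$. Set $g = \mathcal{J}(x)^{\mathsf{T}} F(x)$ and $d = -F(x)$. Then $\langle g, d \rangle \leq -\frac{\varepsilon}{c_2^2} \|g\|^2$, i.e. there is a constant $c_3 = \varepsilon / c_2^2 > 0$ with $\langle \nabla f(x), d \rangle \leq -c_3 \|\nabla f(x)\|^2$ for the merit function $f = \frac{1}{2}\|F\|^2$. -/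
open Matrix

/-- If `‖𝒥(x)ᵀ v‖ ≤ c₂ ‖v‖` for all `v` and the safeguard
`⟪F x, 𝒥(x) F x⟫ ≥ ε ‖F x‖²` holds, then with `g = 𝒥(x)ᵀ F x` and `d = -F x` one has
`⟪g, d⟫ ≤ -(ε / c₂²) ‖g‖²`. -/
theorem descent_estimate_from_safeguard (n : ℕ)
    (F : EuclideanSpace ℝ (Fin n) → EuclideanSpace ℝ (Fin n))
    (x : EuclideanSpace ℝ (Fin n)) (J : Matrix (Fin n) (Fin n) ℝ)
    (c₂ ε : ℝ) (hc₂ : 0 < c₂) (hε : 0 < ε)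
    (hbound : ∀ v : EuclideanSpace ℝ (Fin n), ‖Matrix.toEuclideanLin Jᵀ v‖ ≤ c₂ * ‖v‖)
    (hsafe : (inner ℝ (F x) (Matrix.toEuclideanLin J (F x)) : ℝ) ≥ ε * ‖F x‖ ^ 2)
    (g d : EuclideanSpace ℝ (Fin n))
    (hg : g = Matrix.toEuclideanLin Jᵀ (F x)) (hd : d = -F x) :
    (inner ℝ g d : ℝ) ≤ -(ε / c₂ ^ 2) * ‖g‖ ^ 2 := by
  have hadj : (inner ℝ g (F x) : ℝ) = inner ℝ (F x) (Matrix.toEuclideanLin J (F x)) := by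
    have h := Matrix.toEuclideanLin_conjTranspose_eq_adjoint J
    rw [Matrix.conjTranspose_eq_transpose_of_trivial] at h
    rw [hg, h, LinearMap.adjoint_inner_left]
  have h1 : ‖g‖ ^ 2 ≤ c₂ ^ 2 * ‖F x‖ ^ 2 := by
    rw [← mul_pow, hg]
    exact pow_le_pow_left₀ (norm_nonneg _) (hbound (F x)) 2
  have h2 : ε / c₂ ^ 2 * ‖g‖ ^ 2 ≤ ε * ‖F x‖ ^ 2 := by
    calc ε / c₂ ^ 2 * ‖g‖ ^ 2 ≤ ε / c₂ ^ 2 * (c₂ ^ 2 * ‖F x‖ ^ 2) := by gcongr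
      _ = ε * ‖F x‖ ^ 2 := by field_simp
  rw [hd, inner_neg_right, hadj]
  linarith
end

section
/- (Main theorem, smooth single-valued case.) Let $F : \mathbb{R}^n \to \mathbb{R}^n$ be continuously differentiable with Jacobian $\mathcal{J}(x) = DF(x)$, and let $f(x) = \frac{1}{2}\|F(x)\|^2$. Let $\varepsilon > 0$, $\gamma > 0$, $M \in \mathbb{N}$, and $0 < a \leq b$. Let $(x_k)_{k\geq 0}$ and $(\lambda_k)_{k \geq 0}$ satisfy, for all $k$: (i) $\langle F(x_k), \mathcal{J}(x_k) F(x_k) \rangle \geq \varepsilon \|F(x_k)\|^2$; (ii) $\lambda_k \in [a, b]$; (iii) $x_{k+1} = x_k - \lambda_k F(x_k)$; (iv) the nonmonotone line search condition $f(x_{k+1}) \leq \max_{0 \leq j \leq \min(k,M)} f(x_{k-j}) - 2\gamma \lambda_k \langle F(x_k), \mathcal{J}(x_k) F(x_k) \rangle$; and (v) all $x_k$ lie in a fixed compact set $K \subseteq \mathbb{R}^n$. Then $\lim_{k \to \infty} \|F(x_k)\| = 0$; in particular every accumulation point $\bar{x}$ of $(x_k)$ satisfies $F(\bar{x}) = 0$.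 -/
open Filter

theorem aux_decay (u : ℕ → ℝ) (q : ℝ) (M : ℕ) (hu : ∀ k, 0 ≤ u k) (hq0 : 0 ≤ q) (hq1 : q < 1)
    (h : ∀ k, ∃ j ≤ min k M, u (k + 1) ≤ q * u (k - j)) : Tendsto u atTop (nhds 0) := by
  have hb : ∀ k, u k ≤ u 0 := by
    intro k
    induction k using Nat.strong_induction_on with
    | _ k ih =>
      rcases k with _ | k
      · exact le_rfl
      · obtain ⟨j, hj, h'⟩ := h k
        have h1 := ih (k - j) (by omega)
        have h2 := hu (k - j)
        nlinarith
  have hm : ∀ m k : ℕ, m * (M + 1) ≤ k → u k ≤ q ^ m * u 0 := by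
    intro m
    induction m with
    | zero => intro k _; simpa using hb k
    | succ m ih =>
      intro k hk
      rw [Nat.succ_mul] at hk
      obtain ⟨k, rfl⟩ : ∃ k', k = k' + 1 := ⟨k - 1, by omega⟩
      obtain ⟨j, hj, h'⟩ := h k
      have h1 := ih (k - j) (by omega)
      calc u (k + 1) ≤ q * u (k - j) := h'
        _ ≤ q * (q ^ m * u 0) := mul_le_mul_of_nonneg_left h1 hq0
        _ = q ^ (m + 1) * u 0 := by ring
  have ht : Tendsto (fun m : ℕ => q ^ m * u 0) atTop (nhds 0) := by
    simpa using (tendsto_pow_atTop_nhds_zero_of_lt_one hq0 hq1).mul_const (u 0)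
  rw [Metric.tendsto_atTop]
  intro e he
  obtain ⟨m, hme⟩ := (ht.eventually (gt_mem_nhds he)).exists
  refine ⟨m * (M + 1), fun k hk => ?_⟩
  rw [Real.dist_eq, sub_zero, abs_of_nonneg (hu k)]
  exact (hm m k hk).trans_lt hme

/-- Main convergence theorem (smooth single-valued case) for the spectral subgradient
algorithm: under the safeguard `⟪F(x_k), 𝒥(x_k) F(x_k)⟫ ≥ ε ‖F(x_k)‖²`, step sizes in
`[a,b] ⊆ (0,∞)`, updates `x_{k+1} = x_k - λ_k F(x_k)`, the nonmonotone line search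
condition for the merit function `f = ½‖F‖²`, and iterates staying in a compact set,
one has `‖F(x_k)‖ → 0`; in particular every accumulation point `x̄` satisfies `F x̄ = 0`. -/
theorem spectral_subgradient_convergence (n : ℕ)
    (F : EuclideanSpace ℝ (Fin n) → EuclideanSpace ℝ (Fin n)) (hF : ContDiff ℝ 1 F)
    (f : EuclideanSpace ℝ (Fin n) → ℝ) (hf : f = fun z => (1 / 2 : ℝ) * ‖F z‖ ^ 2)
    (ε γ a b : ℝ) (hε : 0 < ε) (hγ : 0 < γ) (M : ℕ) (ha : 0 < a) (hab : a ≤ b)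
    (x : ℕ → EuclideanSpace ℝ (Fin n)) (lam : ℕ → ℝ)
    (h1 : ∀ k, (inner ℝ (F (x k)) (fderiv ℝ F (x k) (F (x k))) : ℝ) ≥ ε * ‖F (x k)‖ ^ 2)
    (h2 : ∀ k, lam k ∈ Set.Icc a b)
    (h3 : ∀ k, x (k + 1) = x k - lam k • F (x k))
    (h4 : ∀ k, f (x (k + 1)) ≤
      (Finset.range (min k M + 1)).sup'
        (Finset.nonempty_range_iff.mpr (Nat.succ_ne_zero _)) (fun j => f (x (k - j))) -
      2 * γ * lam k * (inner ℝ (F (x k)) (fderiv ℝ F (x k) (F (x k))) : ℝ))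
    (K : Set (EuclideanSpace ℝ (Fin n))) (hK : IsCompact K) (h5 : ∀ k, x k ∈ K) :
    Tendsto (fun k => ‖F (x k)‖) atTop (nhds 0) ∧
    (∀ xbar : EuclideanSpace ℝ (Fin n), MapClusterPt xbar atTop x → F xbar = 0) := by
  have hL : ∃ L : ℝ, 0 ≤ L ∧ ∀ y ∈ K, ∀ z ∈ K, ‖F z - F y‖ ≤ L * ‖z - y‖ := by
    obtain ⟨R, hR⟩ := hK.isBounded.subset_closedBall 0
    have hc := isCompact_closedBall (0 : EuclideanSpace ℝ (Fin n)) R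
    obtain ⟨C, hC⟩ := hc.exists_bound_of_continuousOn
      (hF.continuous_fderiv one_ne_zero).continuousOn
    refine ⟨max C 0, le_max_right _ _, fun y hy z hz => ?_⟩
    exact Convex.norm_image_sub_le_of_norm_fderiv_le (𝕜 := ℝ)
      (fun w _ => (hF.differentiable one_ne_zero) w)
      (fun w hw => (hC w hw).trans (le_max_left _ _)) (convex_closedBall _ _)
      (hR hy) (hR hz)
  obtain ⟨L, hL0, hL⟩ := hL
  have hb : 0 < b := ha.trans_le hab
  have hstep : ∀ k, ‖F (x (k + 1))‖ ≤ (1 + L * b) * ‖F (x k)‖ := by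
    intro k
    have h := hL _ (h5 k) _ (h5 (k + 1))
    have e : ‖x (k + 1) - x k‖ = lam k * ‖F (x k)‖ := by
      rw [h3 k, sub_sub_cancel_left, norm_neg, norm_smul, Real.norm_eq_abs,
        abs_of_nonneg (ha.le.trans (h2 k).1)]
    rw [e] at h
    have h6 : L * (lam k * ‖F (x k)‖) ≤ L * (b * ‖F (x k)‖) := by
      have := (h2 k).2
      gcongr
    have h7 := norm_le_norm_add_norm_sub' (F (x (k + 1))) (F (x k))
    linarith
  set D : ℝ := (1 + L * b) ^ 2 with hD
  have hDpos : 0 < D := by positivity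
  set c : ℝ := 4 * γ * a * ε / D with hc
  have hcpos : 0 < c := by positivity
  have hfv : ∀ z, f z = (1 / 2 : ℝ) * ‖F z‖ ^ 2 := fun z => by rw [hf]
  have hft : Tendsto (fun k => f (x k)) atTop (nhds 0) := by
    refine aux_decay _ (1 / (1 + c)) M (fun k => by rw [hfv]; positivity) (by positivity)
      (by rw [div_lt_one (by positivity)]; linarith) (fun k => ?_)
    obtain ⟨j, hj, hje⟩ := Finset.exists_mem_eq_sup' (s := Finset.range (min k M + 1))
      (Finset.nonempty_range_iff.mpr (Nat.succ_ne_zero _)) (fun j => f (x (k - j)))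
    refine ⟨j, by simpa [Nat.lt_succ_iff] using hj, ?_⟩
    have h := h4 k
    rw [hje] at h
    have hs : f (x (k + 1)) ≤ D * f (x k) := by
      have := pow_le_pow_left₀ (norm_nonneg _) (hstep k) 2
      rw [hfv, hfv, hD]
      rw [mul_pow] at this
      linarith
    have hi : 4 * γ * a * ε * f (x k) ≤
        2 * γ * lam k * (inner ℝ (F (x k)) (fderiv ℝ F (x k) (F (x k))) : ℝ) := by
      have hl := (h2 k).1
      calc 4 * γ * a * ε * f (x k) = 2 * γ * a * (ε * ‖F (x k)‖ ^ 2) := by rw [hfv]; ring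
        _ ≤ 2 * γ * lam k * (ε * ‖F (x k)‖ ^ 2) := by gcongr
        _ ≤ _ := mul_le_mul_of_nonneg_left (h1 k) (by
            have := ha.trans_le hl
            positivity)
    have hcs : c * f (x (k + 1)) ≤ 4 * γ * a * ε * f (x k) := by
      calc c * f (x (k + 1)) ≤ c * (D * f (x k)) := mul_le_mul_of_nonneg_left hs hcpos.le
        _ = _ := by rw [hc]; field_simp
    rw [one_div, ← div_eq_inv_mul, le_div_iff₀ (by positivity)]
    linarith
  have hmain : Tendsto (fun k => ‖F (x k)‖) atTop (nhds 0) := by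
    have h := (hft.const_mul 2).sqrt
    simp only [mul_zero, Real.sqrt_zero] at h
    refine h.congr (fun k => ?_)
    rw [hfv, show 2 * ((1 / 2 : ℝ) * ‖F (x k)‖ ^ 2) = ‖F (x k)‖ ^ 2 by ring,
      Real.sqrt_sq (norm_nonneg _)]
  refine ⟨hmain, fun xbar hx => ?_⟩
  obtain ⟨φ, hφ, hφx⟩ := MapClusterPt.tendsto_subseq hx
  have t1 := hmain.comp hφ.tendsto_atTop
  have t2 := ((hF.continuous.norm.tendsto xbar).comp hφx)
  exact norm_eq_zero.mp (tendsto_nhds_unique t2 t1)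
end

section
/- (Corollary, smooth single-valued case.) Let $F : \mathbb{R}^n \to \mathbb{R}^n$ be continuously differentiable with Jacobian $\mathcal{J}(x) = DF(x)$, let $f(x) = \frac{1}{2}\|F(x)\|^2$, let $\gamma > 0$, $M \in \mathbb{N}$, $0 < a \leq b$, $r \in [0,1]$, and let $K \subseteq \mathbb{R}^n$ be a compact set on which the convex combination $\mathcal{J}_{cc}(x) = (1-r)\mathcal{J}(x) + r \mathcal{J}(x)^{\mathsf{T}}$ is positive definite for every $x \in K$. Let $(x_k)$, $(\lambda_k)$ satisfy, for all $k$: $\lambda_k \in [a,b]$; $x_{k+1} = x_k - \lambda_k F(x_k)$; the nonmonotone condition $f(x_{k+1}) \leq \max_{0 \leq j \leq \min(k,M)} f(x_{k-j}) - 2\gamma \lambda_k \langle F(x_k), \mathcal{J}(x_k) F(x_k) \rangle$; and $x_k \in K$. Then $\lim_{k \to \infty} \|F(x_k)\| = 0$. -/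
open Matrix Filter

theorem ssg_seq (g : ℕ → ℝ) (M : ℕ) (σ C : ℝ) (hσ : 0 < σ) (hC : 0 ≤ C) (hg : ∀ k, 0 ≤ g k)
    (h : ∀ k, g (k + 1) ≤ (Finset.range (min k M + 1)).sup'
        (Finset.nonempty_range_iff.mpr (Nat.succ_ne_zero _)) (fun j => g (k - j)) - σ * g k)
    (hl : ∀ k, g (k + 1) ≤ C * g k) : Tendsto g atTop (nhds 0) := by
  set V : ℕ → ℝ := fun k => (Finset.range (min k M + 1)).sup'
        (Finset.nonempty_range_iff.mpr (Nat.succ_ne_zero _)) (fun j => g (k - j)) with hV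
  have h' : ∀ k, g (k + 1) ≤ V k - σ * g k := h
  have hle : ∀ k j, j ≤ min k M → g (k - j) ≤ V k := by
    intro k j hj
    exact Finset.le_sup' (fun j => g (k - j)) (Finset.mem_range.mpr (by omega))
  have hgV : ∀ k, g k ≤ V k := fun k => hle k 0 (by omega)
  have hanti : Antitone V := by
    apply antitone_nat_of_succ_le
    intro k
    apply Finset.sup'_le
    intro j hj
    rw [Finset.mem_range] at hj
    rcases j with _ | i
    · have := h' k
      have h1 := mul_nonneg hσ.le (hg k)
      simp only [Nat.sub_zero]
      linarith
    · have := hle k i (by omega)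
      rwa [show k + 1 - (i + 1) = k - i by omega]
  have hV0 : ∀ k, 0 ≤ V k := fun k => (hg k).trans (hgV k)
  have hlim : Tendsto V atTop (nhds (⨅ i, V i)) :=
    tendsto_atTop_ciInf hanti ⟨0, by rintro _ ⟨k, rfl⟩; exact hV0 k⟩
  set L := ⨅ i, V i
  have key : ∀ k, σ * V (k + (M + 1)) ≤ C * (V k - V (k + (M + 1))) := by
    intro k
    obtain ⟨j, hj, hje⟩ := Finset.exists_mem_eq_sup' (s := Finset.range (min (k + (M + 1)) M + 1))
      (Finset.nonempty_range_iff.mpr (Nat.succ_ne_zero _)) (fun j => g (k + (M + 1) - j))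
    have hje' : V (k + (M + 1)) = g (k + (M + 1) - j) := hje
    rw [Finset.mem_range] at hj
    obtain ⟨l, hl1⟩ : ∃ l, k + (M + 1) - j = l + 1 := ⟨k + M - j, by omega⟩
    rw [hl1] at hje'
    have h1 := h' l
    have h2 := hl l
    have h3 : V l ≤ V k := hanti (by omega)
    rw [hje']
    have h4 : C * (σ * g l) ≤ C * (V k - g (l + 1)) :=
      mul_le_mul_of_nonneg_left (by linarith) hC
    have h5 := mul_le_mul_of_nonneg_left h2 hσ.le
    linarith
  have hlim2 : Tendsto (fun k => V (k + (M + 1))) atTop (nhds L) :=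
    (tendsto_add_atTop_iff_nat (M + 1)).mpr hlim
  have hL : σ * L ≤ C * (L - L) :=
    le_of_tendsto_of_tendsto' (hlim2.const_mul σ) ((hlim.sub hlim2).const_mul C) key
  have hL0 : 0 ≤ L := ge_of_tendsto' hlim hV0
  have hLz : L = 0 := by
    rw [sub_self, mul_zero] at hL
    nlinarith
  rw [hLz] at hlim
  exact squeeze_zero hg hgV hlim

theorem ssg_lower {E : Type*} [NormedAddCommGroup E] [InnerProductSpace ℝ E]
    [FiniteDimensional ℝ E] (A : E → E →L[ℝ] E) (hA : Continuous A) (K : Set E)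
    (hK : IsCompact K) (hpd : ∀ x ∈ K, ∀ v, v ≠ 0 → 0 < (inner ℝ v (A x v) : ℝ)) :
    ∃ u : ℝ, 0 < u ∧ ∀ x ∈ K, ∀ v, u * ‖v‖ ^ 2 ≤ inner ℝ v (A x v) := by
  have hS : IsCompact (K ×ˢ Metric.sphere (0 : E) 1) := hK.prod (isCompact_sphere 0 1)
  have hc : Continuous (fun p : E × E => (inner ℝ p.2 (A p.1 p.2) : ℝ)) :=
    continuous_snd.inner ((hA.comp continuous_fst).clm_apply continuous_snd)
  obtain ⟨u, hu, hmin⟩ : ∃ u : ℝ, 0 < u ∧ ∀ p ∈ K ×ˢ Metric.sphere (0 : E) 1,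
      u ≤ inner ℝ p.2 (A p.1 p.2) := by
    rcases (K ×ˢ Metric.sphere (0 : E) 1).eq_empty_or_nonempty with he | hne
    · exact ⟨1, one_pos, by simp [he]⟩
    · obtain ⟨p, hp, hm⟩ := hS.exists_isMinOn hne hc.continuousOn
      refine ⟨_, hpd p.1 hp.1 p.2 ?_, fun q hq => hm hq⟩
      intro h0
      have := hp.2
      simp [h0] at this
  refine ⟨u, hu, fun x hx v => ?_⟩
  by_cases hv : v = 0
  · simp [hv]
  have hn : ‖v‖ ≠ 0 := norm_ne_zero_iff.mpr hv
  have h := hmin (x, ‖v‖⁻¹ • v) ⟨hx, by simp [norm_smul, hn]⟩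
  simp only [map_smul, inner_smul_left, inner_smul_right] at h
  have h2 := mul_le_mul_of_nonneg_right h (sq_nonneg ‖v‖)
  refine h2.trans (le_of_eq ?_)
  simp
  field_simp

theorem ssg_lip {E : Type*} [NormedAddCommGroup E] [InnerProductSpace ℝ E]
    [FiniteDimensional ℝ E] (F : E → E) (hF : ContDiff ℝ 1 F) (K : Set E)
    (hK : IsCompact K) : ∃ D : ℝ, 0 ≤ D ∧ ∀ x ∈ K, ∀ y ∈ K, ‖F y - F x‖ ≤ D * ‖y - x‖ := by
  have hc : Continuous (fderiv ℝ F) := hF.continuous_fderiv one_ne_zero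
  obtain ⟨R, hR⟩ := hK.isBounded.subset_closedBall (0 : E)
  obtain ⟨D, hD⟩ := (isCompact_closedBall (0 : E) R).exists_bound_of_continuousOn hc.continuousOn
  refine ⟨max D 0, le_max_right _ _, fun x hx y hy => ?_⟩
  exact (convex_closedBall (0 : E) R).norm_image_sub_le_of_norm_fderiv_le
    (fun z _ => (hF.differentiable one_ne_zero) z)
    (fun z hz => (hD z hz).trans (le_max_left _ _))
    (hR hx) (hR hy)

/-- Corollary (smooth single-valued case): if on the compact set `K` containing the
iterates the convex combination `𝒥_cc(x) = (1-r) 𝒥(x) + r 𝒥(x)ᵀ` of the Jacobian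
(as a matrix) and its transpose is positive definite, then under step sizes in `[a,b]`,
updates `x_{k+1} = x_k - λ_k F(x_k)` and the nonmonotone line search condition for the
merit function `f = ½‖F‖²`, one has `‖F(x_k)‖ → 0`. -/
theorem spectral_subgradient_convergence_of_posDef_jacobian (n : ℕ)
    (F : EuclideanSpace ℝ (Fin n) → EuclideanSpace ℝ (Fin n)) (hF : ContDiff ℝ 1 F)
    (J : EuclideanSpace ℝ (Fin n) → Matrix (Fin n) (Fin n) ℝ)
    (hJ : ∀ z, Matrix.toEuclideanLin (J z) = (fderiv ℝ F z : EuclideanSpace ℝ (Fin n) →ₗ[ℝ] EuclideanSpace ℝ (Fin n)))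
    (f : EuclideanSpace ℝ (Fin n) → ℝ) (hf : f = fun z => (1 / 2 : ℝ) * ‖F z‖ ^ 2)
    (γ a b r : ℝ) (hγ : 0 < γ) (M : ℕ) (ha : 0 < a) (hab : a ≤ b)
    (hr : r ∈ Set.Icc (0 : ℝ) 1)
    (K : Set (EuclideanSpace ℝ (Fin n))) (hK : IsCompact K)
    (hpd : ∀ x ∈ K, ∀ v : EuclideanSpace ℝ (Fin n), v ≠ 0 →
      0 < (inner ℝ v (Matrix.toEuclideanLin ((1 - r) • J x + r • (J x)ᵀ) v) : ℝ))
    (x : ℕ → EuclideanSpace ℝ (Fin n)) (lam : ℕ → ℝ)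
    (h2 : ∀ k, lam k ∈ Set.Icc a b)
    (h3 : ∀ k, x (k + 1) = x k - lam k • F (x k))
    (h4 : ∀ k, f (x (k + 1)) ≤
      (Finset.range (min k M + 1)).sup'
        (Finset.nonempty_range_iff.mpr (Nat.succ_ne_zero _)) (fun j => f (x (k - j))) -
      2 * γ * lam k * (inner ℝ (F (x k)) (Matrix.toEuclideanLin (J (x k)) (F (x k))) : ℝ))
    (h5 : ∀ k, x k ∈ K) :
    Tendsto (fun k => ‖F (x k)‖) atTop (nhds 0) := by
  have hJv : ∀ z v, Matrix.toEuclideanLin (J z) v = fderiv ℝ F z v := fun z v => by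
    rw [hJ]; rfl
  have hcc : ∀ z v, (inner ℝ v (Matrix.toEuclideanLin ((1 - r) • J z + r • (J z)ᵀ) v) : ℝ)
      = inner ℝ v (fderiv ℝ F z v) := by
    intro z v
    have ht : (inner ℝ v (Matrix.toEuclideanLin (J z)ᵀ v) : ℝ)
        = inner ℝ v (Matrix.toEuclideanLin (J z) v) := by
      rw [← Matrix.conjTranspose_eq_transpose_of_trivial,
        Matrix.toEuclideanLin_conjTranspose_eq_adjoint, LinearMap.adjoint_inner_right,
        real_inner_comm]
    rw [map_add, map_smul, map_smul, LinearMap.add_apply, LinearMap.smul_apply,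
      LinearMap.smul_apply, inner_add_right, inner_smul_right, inner_smul_right, ht, hJv]
    ring
  obtain ⟨u, hu, hub⟩ := ssg_lower (fderiv ℝ F) (hF.continuous_fderiv one_ne_zero) K hK
    (fun z hz v hv => by rw [← hcc]; exact hpd z hz v hv)
  obtain ⟨D, hD, hlip⟩ := ssg_lip F hF K hK
  have hb : 0 < b := ha.trans_le hab
  have hstep : ∀ k, ‖F (x (k + 1))‖ ≤ (1 + D * b) * ‖F (x k)‖ := by
    intro k
    have h := hlip (x k) (h5 k) (x (k + 1)) (h5 (k + 1))
    have e : ‖x (k + 1) - x k‖ = lam k * ‖F (x k)‖ := by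
      rw [h3, sub_sub_cancel_left, norm_neg, norm_smul, Real.norm_of_nonneg
        (ha.le.trans (h2 k).1)]
    rw [e] at h
    have h6 : D * (lam k * ‖F (x k)‖) ≤ D * (b * ‖F (x k)‖) := by
      have := (h2 k).2
      gcongr
    have h7 := norm_le_norm_add_norm_sub' (F (x (k + 1))) (F (x k))
    linarith
  have hmain : Tendsto (fun k => f (x k)) atTop (nhds 0) := by
    apply ssg_seq _ M (4 * γ * a * u) ((1 + D * b) ^ 2) (by positivity) (by positivity)
    · intro k
      simp only [hf]
      positivity
    · intro k
      refine (h4 k).trans (sub_le_sub_left ?_ _)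
      rw [hJv]
      have h8 := hub (x k) (h5 k) (F (x k))
      have h9 := (h2 k).1
      have h10 : 2 * γ * a * (u * ‖F (x k)‖ ^ 2)
          ≤ 2 * γ * lam k * inner ℝ (F (x k)) (fderiv ℝ F (x k) (F (x k))) := by
        have : 0 ≤ u * ‖F (x k)‖ ^ 2 := by positivity
        have : 0 ≤ lam k := ha.le.trans h9
        gcongr
      refine le_trans (le_of_eq ?_) h10
      simp only [hf]
      ring
    · intro k
      simp only [hf]
      have h11 := pow_le_pow_left₀ (norm_nonneg _) (hstep k) 2
      rw [mul_pow] at h11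
      linarith
  have hs := (hmain.const_mul 2).sqrt
  simp only [mul_zero, Real.sqrt_zero] at hs
  refine hs.congr fun k => ?_
  simp only [hf]
  rw [show 2 * (1 / 2 * ‖F (x k)‖ ^ 2) = ‖F (x k)‖ ^ 2 by ring, Real.sqrt_sq (norm_nonneg _)]
end
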